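/- arXiv:1604.00416 — 2 statements merged into one kernel-verified Lean document; each statement's English description precedes it below -/
import Mathlib

section
/- The Weyl–Titchmarsh function of a regular Sturm–Liouville problem is a Nevanlinna function (part of Statement 2.1°): Let a > 0, q ∈ L¹(0,a), α ∈ (0,π), and let φ, ψ, φ', ψ' be as in the context. Let γ be a Nevanlinna function or γ ≡ ∞, and define for non-real z: m_γ(z) := (ψ'(a;z) − ψ(a;z)γ(z))/(φ'(a;z) − φ(a;z)γ(z)) (and m_∞(z) := ψ(a;z)/φ(a;z)). Then the denominator does not vanish for z ∈ ℂ∖ℝ, and m_γ is a Nevanlinna function: it is holomorphic on ℂ∖ℝ, satisfies m_γ(conj z) = conj(m_γ(z)), and Im m_γ(z) ≥ 0 for Im z > 0. -/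
open MeasureTheory Set

/-- `u` is, for each `z ∈ ℂ`, the continuous solution on `[0,a]` of the Volterra
integral equation `u(x;z) = c₀ + c₁·x + ∫₀ˣ (x-s)(q(s)-z) u(s;z) ds`. -/
def IsRegSolution (a : ℝ) (q : ℝ → ℝ) (c₀ c₁ : ℝ) (u : ℂ → ℝ → ℂ) : Prop :=
  (∀ z : ℂ, ContinuousOn (u z) (Icc 0 a)) ∧
  ∀ z : ℂ, ∀ x ∈ Icc (0:ℝ) a,
    u z x = (c₀ : ℂ) + (x : ℂ) * (c₁ : ℂ) +
      ∫ s in (0:ℝ)..x, ((x : ℂ) - (s : ℂ)) * ((q s : ℂ) - z) * u z s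

/-- A Nevanlinna function: holomorphic on `ℂ∖ℝ`, symmetric w.r.t. conjugation,
with nonnegative imaginary part on the upper half-plane. -/
def IsNevanlinna (γ : ℂ → ℂ) : Prop :=
  DifferentiableOn ℂ γ {z : ℂ | z.im ≠ 0} ∧
  (∀ z : ℂ, z.im ≠ 0 → γ (starRingEnd ℂ z) = starRingEnd ℂ (γ z)) ∧
  (∀ z : ℂ, 0 < z.im → 0 ≤ (γ z).im)

/-!
Let `φ`, `ψ` have real initial data at `a` with Wronskian `D > 0`, and write the boundary parameter
at `b` as `γ = B / A`, so that `γ ≡ ∞` is `A = 0`. Everything rests on Lagrange's identity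
`W(u, v)(b) - W(u, v)(a) = (z - w) ∫ u v` for solutions `u` at `z` and `v` at `w`.

Applied to `u` and `conj u` it reads `Im (u' conj u)(b) = Im (u' conj u)(a) - Im z ∫ |u|²`. A
boundary condition `u' A = u B` at `b` with `Im (B conj A) ≥ 0` makes the left side nonnegative when
`Im z > 0`. For `u = φ`, whose initial data are real, this is impossible, so the denominator of `m`
does not vanish; for `u = ψ - m φ` the first term on the right is `D Im m`, so `Im m ≥ 0`.

Applied to solutions with the same initial data at two spectral parameters, it is the variation of
constants formula: `u(·; w) - u(·; z)` is of order `|w - z| sup |u(·; w)|`, hence `w ↦ u(·; w)` is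
continuous, and then the formula exhibits the derivative of the values at `b`. Symmetry under
conjugation is uniqueness of solutions with real initial data.
-/

open Filter Topology
open scoped ComplexConjugate

section Primitive

variable {E F : Type*} [NormedAddCommGroup E] [NormedSpace ℝ E] [NormedAddCommGroup F]
  [NormedSpace ℝ F] {a b x : ℝ}

theorem absolutelyContinuousOnInterval_of_dist_le {X Y : Type*} [PseudoMetricSpace X]
    [PseudoMetricSpace Y] {f : ℝ → X} {g : ℝ → Y} (hg : AbsolutelyContinuousOnInterval g a b)
    (hfg : ∀ x ∈ uIcc a b, ∀ y ∈ uIcc a b, dist (f x) (f y) ≤ dist (g x) (g y)) :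
    AbsolutelyContinuousOnInterval f a b := by
  refine squeeze_zero' (.of_forall fun _ => Finset.sum_nonneg fun _ _ => dist_nonneg) ?_ hg
  filter_upwards [mem_inf_of_right (mem_principal_self _)] with I hI
  exact Finset.sum_le_sum fun i hi => hfg _ (hI.1 i hi).1 _ (hI.1 i hi).2

theorem absolutelyContinuousOnInterval_integral {f : ℝ → E}
    (hf : IntervalIntegrable f volume a b) :
    AbsolutelyContinuousOnInterval (fun x => ∫ t in a..x, f t) a b := by
  refine absolutelyContinuousOnInterval_of_dist_le
    (hf.norm.absolutelyContinuousOnInterval_intervalIntegral left_mem_uIcc) fun x hx y hy => ?_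
  have hint : ∀ y ∈ uIcc a b, IntervalIntegrable f volume a y := fun y hy =>
    hf.mono_set (uIcc_subset_uIcc left_mem_uIcc hy)
  rw [dist_eq_norm, dist_eq_norm, intervalIntegral.integral_interval_sub_left (hint x hx)
    (hint y hy), intervalIntegral.integral_interval_sub_left (hint x hx).norm (hint y hy).norm]
  exact intervalIntegral.norm_integral_le_abs_integral_norm

/-- `F` is absolutely continuous on the interval with endpoints `a` and `b`, with `F' = f` almost
everywhere. This is the sense in which derivatives of solutions are taken; it is encoded through
the fundamental theorem of calculus. -/
structure IsPrimitiveOn (f F : ℝ → E) (a b : ℝ) : Prop where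
  intervalIntegrable : IntervalIntegrable f volume a b
  eq_add_integral : ∀ x ∈ uIcc a b, F x = F a + ∫ t in a..x, f t

namespace IsPrimitiveOn

theorem of_intervalIntegrable {f : ℝ → E} (hf : IntervalIntegrable f volume a b) (c : E) :
    IsPrimitiveOn f (fun x => c + ∫ t in a..x, f t) a b :=
  ⟨hf, fun x _ => by simp⟩

theorem absolutelyContinuousOnInterval {f F : ℝ → E} (hF : IsPrimitiveOn f F a b) :
    AbsolutelyContinuousOnInterval F a b :=
  absolutelyContinuousOnInterval_of_dist_le
    (absolutelyContinuousOnInterval_integral hF.intervalIntegrable) fun x hx y hy => by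
      rw [hF.eq_add_integral x hx, hF.eq_add_integral y hy, dist_add_left]

theorem continuousOn {f F : ℝ → E} (hF : IsPrimitiveOn f F a b) : ContinuousOn F (uIcc a b) :=
  hF.absolutelyContinuousOnInterval.continuousOn

theorem ae_hasDerivAt [CompleteSpace E] {f F : ℝ → E} (hF : IsPrimitiveOn f F a b) :
    ∀ᵐ x, x ∈ uIcc a b → HasDerivAt F (f x) x := by
  filter_upwards [hF.intervalIntegrable.ae_hasDerivAt_integral, Measure.ae_ne volume (min a b),
    Measure.ae_ne volume (max a b)] with x hderiv hmin hmax hx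
  have hnhds : uIcc a b ∈ 𝓝 x := Icc_mem_nhds (hx.1.lt_of_ne' hmin) (hx.2.lt_of_ne hmax)
  refine ((hderiv hx a left_mem_uIcc).const_add (F a)).congr_of_eventuallyEq ?_
  filter_upwards [hnhds] with y hy using hF.eq_add_integral y hy

theorem of_ae_hasDerivAt [CompleteSpace E] {f F : ℝ → E} (hf : IntervalIntegrable f volume a b)
    (hF : AbsolutelyContinuousOnInterval F a b)
    (hderiv : ∀ᵐ x, x ∈ uIcc a b → HasDerivAt F (f x) x) : IsPrimitiveOn f F a b := by
  refine ⟨hf, fun x hx => ?_⟩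
  have hsub := hF.fun_sub (absolutelyContinuousOnInterval_integral hf)
  obtain ⟨C, hC⟩ := hsub.const_of_ae_hasDerivAt_zero
    (by filter_upwards [hderiv, hf.ae_hasDerivAt_integral] with x hFx hfx hx
        simpa only [sub_self] using! (hFx hx).sub (hfx hx a left_mem_uIcc))
  have h := (hC x hx).trans (hC a left_mem_uIcc).symm
  rw [intervalIntegral.integral_same, sub_zero] at h
  exact sub_eq_iff_eq_add.1 h

theorem sub {f g F G : ℝ → E} (hF : IsPrimitiveOn f F a b) (hG : IsPrimitiveOn g G a b) :
    IsPrimitiveOn (fun t => f t - g t) (fun t => F t - G t) a b := by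
  refine ⟨hF.intervalIntegrable.sub hG.intervalIntegrable, fun x hx => ?_⟩
  have hsub : uIcc a x ⊆ uIcc a b := uIcc_subset_uIcc left_mem_uIcc hx
  rw [intervalIntegral.integral_sub (hF.intervalIntegrable.mono_set hsub)
    (hG.intervalIntegrable.mono_set hsub), hF.eq_add_integral x hx, hG.eq_add_integral x hx]
  abel

theorem clm_comp [CompleteSpace E] [CompleteSpace F] {f Φ : ℝ → E} (L : E →L[ℝ] F)
    (hΦ : IsPrimitiveOn f Φ a b) : IsPrimitiveOn (fun t => L (f t)) (fun t => L (Φ t)) a b := by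
  refine ⟨⟨L.integrable_comp hΦ.intervalIntegrable.1, L.integrable_comp hΦ.intervalIntegrable.2⟩,
    fun x hx => ?_⟩
  rw [L.intervalIntegral_comp_comm
    (hΦ.intervalIntegrable.mono_set (uIcc_subset_uIcc left_mem_uIcc hx)),
    hΦ.eq_add_integral x hx, map_add]

theorem mul {A : Type*} [NormedRing A] [NormMulClass A] [NormedAlgebra ℝ A] [CompleteSpace A]
    {f g F G : ℝ → A} (hF : IsPrimitiveOn f F a b) (hG : IsPrimitiveOn g G a b) :
    IsPrimitiveOn (fun t => f t * G t + F t * g t) (fun t => F t * G t) a b := by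
  refine .of_ae_hasDerivAt ((hF.intervalIntegrable.mul_continuousOn hG.continuousOn).add
      (hG.intervalIntegrable.continuousOn_mul hF.continuousOn))
    (hF.absolutelyContinuousOnInterval.smul hG.absolutelyContinuousOnInterval) ?_
  filter_upwards [hF.ae_hasDerivAt, hG.ae_hasDerivAt] with x hFx hGx hx
  exact (hFx hx).mul (hGx hx)

end IsPrimitiveOn

theorem integral_sub_mul_eq_integral_integral {f : ℝ → ℂ} (hf : IntervalIntegrable f volume a b) :
    ∫ s in a..b, ((b : ℂ) - s) * f s = ∫ t in a..b, ∫ s in a..t, f s := by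
  have hF : IsPrimitiveOn f (fun x => ∫ t in a..x, f t) a b := by
    simpa only [zero_add] using IsPrimitiveOn.of_intervalIntegrable hf 0
  have hid : IsPrimitiveOn (fun _ => -1) (fun t : ℝ => (b : ℂ) - t) a b :=
    ⟨intervalIntegrable_const, fun x _ => by simp⟩
  have hparts := (hid.mul hF).eq_add_integral b right_mem_uIcc
  rw [intervalIntegral.integral_add (intervalIntegrable_const.mul_continuousOn hF.continuousOn)
    (hf.continuousOn_mul hid.continuousOn)] at hparts
  simp only [neg_mul, one_mul, intervalIntegral.integral_neg, sub_self, zero_mul,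
    intervalIntegral.integral_same, mul_zero, zero_add] at hparts
  linear_combination -hparts

theorem isPrimitiveOn_of_eq_add_integral_sub_mul {f u : ℝ → ℂ} {c : ℂ}
    (hf : IntervalIntegrable f volume a b) (hu : ∀ x ∈ uIcc a b,
      u x = u a + ((x : ℂ) - a) * c + ∫ s in a..x, ((x : ℂ) - s) * f s) :
    IsPrimitiveOn (fun x => c + ∫ t in a..x, f t) u a b := by
  have hF : IsPrimitiveOn f (fun x => ∫ t in a..x, f t) a b := by
    simpa only [zero_add] using IsPrimitiveOn.of_intervalIntegrable hf 0
  refine ⟨intervalIntegrable_const.add hF.continuousOn.intervalIntegrable, fun x hx => ?_⟩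
  have hsub : uIcc a x ⊆ uIcc a b := uIcc_subset_uIcc left_mem_uIcc hx
  rw [hu x hx, integral_sub_mul_eq_integral_integral (hf.mono_set hsub),
    intervalIntegral.integral_add intervalIntegrable_const
      (hF.continuousOn.mono hsub).intervalIntegrable, intervalIntegral.integral_const,
    Complex.real_smul, Complex.ofReal_sub, add_assoc]

end Primitive

/-- The Wronskian `u v' - u' v`. The second entry of each pair `(u, u')`, `(v, v')` is an arbitrary
function, meant to be the derivative of the first. -/
def wronskian (u u' v v' : ℝ → ℂ) (x : ℝ) : ℂ := u x * v' x - u' x * v x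

section Solution

/-- `u` solves `-u'' + q u = z u` on the interval with endpoints `a` and `b`, with derivative `u'`;
the equation is encoded as the first-order system for `(u, u')`, in the almost-everywhere sense. -/
structure IsSturmLiouvilleSol (q : ℝ → ℝ) (z : ℂ) (u u' : ℝ → ℂ) (a b : ℝ) : Prop where
  isPrimitiveOn : IsPrimitiveOn u' u a b
  isPrimitiveOn_deriv : IsPrimitiveOn (fun t => ((q t : ℂ) - z) * u t) u' a b

variable {a b x : ℝ} {q : ℝ → ℝ} {z w : ℂ} {u u' v v' p p' r r' : ℝ → ℂ}

namespace IsSturmLiouvilleSol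

theorem continuousOn (hu : IsSturmLiouvilleSol q z u u' a b) : ContinuousOn u (uIcc a b) :=
  hu.isPrimitiveOn.continuousOn

theorem map_conj (hu : IsSturmLiouvilleSol q z u u' a b) :
    IsSturmLiouvilleSol q (conj z) (fun t => conj (u t)) (fun t => conj (u' t)) a b where
  isPrimitiveOn := hu.isPrimitiveOn.clm_comp (Complex.conjCLE : ℂ →L[ℝ] ℂ)
  isPrimitiveOn_deriv := by
    simpa using! hu.isPrimitiveOn_deriv.clm_comp (Complex.conjCLE : ℂ →L[ℝ] ℂ)

theorem sub (hu : IsSturmLiouvilleSol q z u u' a b) (hv : IsSturmLiouvilleSol q z v v' a b) :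
    IsSturmLiouvilleSol q z (fun t => u t - v t) (fun t => u' t - v' t) a b where
  isPrimitiveOn := hu.isPrimitiveOn.sub hv.isPrimitiveOn
  isPrimitiveOn_deriv := by
    simpa only [mul_sub] using hu.isPrimitiveOn_deriv.sub hv.isPrimitiveOn_deriv

theorem const_mul (c : ℂ) (hu : IsSturmLiouvilleSol q z u u' a b) :
    IsSturmLiouvilleSol q z (fun t => c * u t) (fun t => c * u' t) a b where
  isPrimitiveOn := hu.isPrimitiveOn.clm_comp (ContinuousLinearMap.mul ℝ ℂ c)
  isPrimitiveOn_deriv := by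
    simpa only [ContinuousLinearMap.mul_apply', mul_left_comm c]
      using hu.isPrimitiveOn_deriv.clm_comp (ContinuousLinearMap.mul ℝ ℂ c)

theorem wronskian_eq_add_integral (hu : IsSturmLiouvilleSol q z u u' a b)
    (hv : IsSturmLiouvilleSol q w v v' a b) (hx : x ∈ uIcc a b) :
    wronskian u u' v v' x = wronskian u u' v v' a + (z - w) * ∫ t in a..x, u t * v t := by
  have hW := (hu.isPrimitiveOn.mul hv.isPrimitiveOn_deriv).sub
    (hu.isPrimitiveOn_deriv.mul hv.isPrimitiveOn)
  have hderiv : ∀ t, u' t * v' t + u t * ((q t - w) * v t) -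
      ((q t - z) * u t * v t + u' t * v' t) = (z - w) * (u t * v t) := fun t => by ring
  simpa only [hderiv, intervalIntegral.integral_const_mul] using! hW.eq_add_integral x hx

theorem wronskian_eq_left (hu : IsSturmLiouvilleSol q z u u' a b)
    (hv : IsSturmLiouvilleSol q z v v' a b) (hx : x ∈ uIcc a b) :
    wronskian u u' v v' x = wronskian u u' v v' a := by
  rw [hu.wronskian_eq_add_integral hv hx, sub_self, zero_mul, add_zero]

theorem im_deriv_mul_conj (hu : IsSturmLiouvilleSol q z u u' a b) :
    (u' b * conj (u b)).im = (u' a * conj (u a)).im - z.im * ∫ t in a..b, ‖u t‖ ^ 2 := by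
  have hW := hu.wronskian_eq_add_integral hu.map_conj right_mem_uIcc
  have hnorm : ∫ t in a..b, u t * conj (u t) = ((∫ t in a..b, ‖u t‖ ^ 2 : ℝ) : ℂ) := by
    simp only [Complex.mul_conj', ← Complex.ofReal_pow, intervalIntegral.integral_ofReal]
  have him := congrArg Complex.im hW
  simp only [hnorm, wronskian, Complex.sub_im, Complex.add_im, Complex.mul_im, Complex.conj_re,
    Complex.conj_im, Complex.sub_re, Complex.ofReal_re, Complex.ofReal_im] at him ⊢
  linarith

theorem exists_ne_zero (hab : a ≠ b) (hu : IsSturmLiouvilleSol q z u u' a b)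
    (hinit : u a ≠ 0 ∨ u' a ≠ 0) : ∃ x ∈ uIcc a b, u x ≠ 0 := by
  by_contra! hzero
  have hderiv : ∀ x ∈ uIcc a b, u' x = u' a := fun x hx => by
    rw [hu.isPrimitiveOn_deriv.eq_add_integral x hx, intervalIntegral.integral_zero_ae
      (.of_forall fun t ht => ?_), add_zero]
    rw [hzero t (uIcc_subset_uIcc left_mem_uIcc hx (uIoc_subset_uIcc ht)), mul_zero]
  have hb := hu.isPrimitiveOn.eq_add_integral b right_mem_uIcc
  rw [hzero b right_mem_uIcc, hzero a left_mem_uIcc, zero_add,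
    intervalIntegral.integral_congr hderiv, intervalIntegral.integral_const, eq_comm,
    smul_eq_zero_iff_right (sub_ne_zero.2 hab.symm)] at hb
  exact hinit.elim (· (hzero a left_mem_uIcc)) (· hb)

theorem integral_norm_sq_pos (hab : a < b) (hu : IsSturmLiouvilleSol q z u u' a b)
    (hinit : u a ≠ 0 ∨ u' a ≠ 0) : 0 < ∫ t in a..b, ‖u t‖ ^ 2 := by
  obtain ⟨x, hx, hux⟩ := hu.exists_ne_zero hab.ne hinit
  rw [uIcc_of_le hab.le] at hx
  exact intervalIntegral.integral_pos hab
    ((hu.continuousOn.mono (uIcc_of_le hab.le).ge).norm.pow 2) (fun _ _ => by positivity)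
    ⟨x, hx, by positivity⟩

end IsSturmLiouvilleSol

/-- `(p, p')` and `(r, r')` span the solutions of `-u'' + q u = z u`: both are solutions, and their
Wronskian, which is constant, does not vanish. -/
structure IsFundamentalSystem (q : ℝ → ℝ) (z : ℂ) (p p' r r' : ℝ → ℂ) (a b : ℝ) : Prop where
  left : IsSturmLiouvilleSol q z p p' a b
  right : IsSturmLiouvilleSol q z r r' a b
  wronskian_ne_zero : wronskian p p' r r' a ≠ 0

namespace IsFundamentalSystem

-- The functions `u`, `u'` are arbitrary here: this is the Plücker relation between three vectors
-- in `ℂ²`, combined with the constancy of the Wronskian of `p` and `r`.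
theorem wronskian_mul (h : IsFundamentalSystem q z p p' r r' a b) (u u' : ℝ → ℂ)
    (hx : x ∈ uIcc a b) :
    wronskian p p' r r' a * u x = p x * wronskian u u' r r' x - r x * wronskian u u' p p' x := by
  rw [← h.left.wronskian_eq_left h.right hx]
  simp only [wronskian]
  ring

theorem wronskian_mul_deriv (h : IsFundamentalSystem q z p p' r r' a b) (u u' : ℝ → ℂ)
    (hx : x ∈ uIcc a b) :
    wronskian p p' r r' a * u' x = p' x * wronskian u u' r r' x - r' x * wronskian u u' p p' x := by
  rw [← h.left.wronskian_eq_left h.right hx]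
  simp only [wronskian]
  ring

theorem eq_of_eq_left (h : IsFundamentalSystem q z p p' r r' a b)
    (hu : IsSturmLiouvilleSol q z u u' a b) (hv : IsSturmLiouvilleSol q z v v' a b)
    (hinit : u a = v a) (hinit' : u' a = v' a) (hx : x ∈ uIcc a b) :
    u x = v x ∧ u' x = v' x := by
  have hW : ∀ {s s'}, IsSturmLiouvilleSol q z s s' a b →
      wronskian u u' s s' x = wronskian v v' s s' x := fun hs => by
    rw [hu.wronskian_eq_left hs hx, hv.wronskian_eq_left hs hx, wronskian, wronskian, hinit,
      hinit']
  refine ⟨mul_left_cancel₀ h.wronskian_ne_zero ?_, mul_left_cancel₀ h.wronskian_ne_zero ?_⟩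
  · rw [h.wronskian_mul u u' hx, h.wronskian_mul v v' hx, hW h.left, hW h.right]
  · rw [h.wronskian_mul_deriv u u' hx, h.wronskian_mul_deriv v v' hx, hW h.left, hW h.right]

end IsFundamentalSystem

end Solution

theorem continuousAt_of_norm_sub_le {X E : Type*} [PseudoMetricSpace X] [SeminormedAddCommGroup E]
    {f : X → E} {x₀ : X} {C : ℝ} (hC : 0 ≤ C) (h : ∀ x, ‖f x - f x₀‖ ≤ C * dist x x₀ * ‖f x‖) :
    ContinuousAt f x₀ := by
  have hdist : Tendsto (fun x => C * dist x x₀) (𝓝 x₀) (𝓝 0) := by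
    simpa using (tendsto_id.dist tendsto_const_nhds : Tendsto (dist · x₀) (𝓝 x₀) _).const_mul C
  rw [ContinuousAt, tendsto_iff_norm_sub_tendsto_zero]
  refine squeeze_zero' (.of_forall fun _ => norm_nonneg _) ?_
    (by simpa only [zero_mul] using hdist.mul_const (2 * ‖f x₀‖))
  filter_upwards [hdist.eventually_le_const one_half_pos] with x hx
  have hbound : ‖f x‖ ≤ 2 * ‖f x₀‖ := by
    have := norm_le_norm_add_norm_sub' (f x) (f x₀)
    nlinarith [h x, mul_le_mul_of_nonneg_right hx (norm_nonneg (f x))]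
  exact (h x).trans (by gcongr)

theorem hasDerivAt_of_eq_add_sub_mul {𝕜 : Type*} [NontriviallyNormedField 𝕜] {f g : 𝕜 → 𝕜}
    {x c : 𝕜} (hf : ∀ y, f y = c + (y - x) * g y) (hg : ContinuousAt g x) :
    HasDerivAt f (g x) x := by
  rw [hasDerivAt_iff_tendsto_slope]
  refine (hg.tendsto.mono_left nhdsWithin_le_nhds).congr' ?_
  filter_upwards [self_mem_nhdsWithin] with y hy
  rw [slope_def_field, hf y, hf x, sub_self, zero_mul, add_zero, add_sub_cancel_left,
    mul_div_cancel_left₀ _ (sub_ne_zero.2 hy)]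

theorem norm_integral_mul_le {A : Type*} [NonUnitalNormedRing A] [NormedSpace ℝ A] {a b x M N : ℝ}
    {f g : ℝ → A} (hf : ∀ t ∈ uIcc a b, ‖f t‖ ≤ M) (hg : ∀ t ∈ uIcc a b, ‖g t‖ ≤ N)
    (hx : x ∈ uIcc a b) : ‖∫ t in a..x, f t * g t‖ ≤ M * N * |b - a| := by
  have hM : 0 ≤ M := (norm_nonneg _).trans (hf a left_mem_uIcc)
  have hN : 0 ≤ N := (norm_nonneg _).trans (hg a left_mem_uIcc)
  calc ‖∫ t in a..x, f t * g t‖ ≤ M * N * |x - a| := by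
        refine intervalIntegral.norm_integral_le_of_norm_le_const fun t ht => ?_
        have ht' := uIcc_subset_uIcc left_mem_uIcc hx (uIoc_subset_uIcc ht)
        exact (norm_mul_le _ _).trans
          (mul_le_mul (hf t ht') (hg t ht') (norm_nonneg _) hM)
    _ ≤ M * N * |b - a| :=
        mul_le_mul_of_nonneg_left (abs_sub_left_of_mem_uIcc hx) (mul_nonneg hM hN)

/-- `u z` is, for every spectral parameter `z`, the solution with derivative `u' z` whose initial
data at `a` are `c₀` and `c₁`, independently of `z`. -/
structure IsSturmLiouvilleFamily (q : ℝ → ℝ) (c₀ c₁ : ℂ) (u u' : ℂ → ℝ → ℂ) (a b : ℝ) : Prop where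
  isSol : ∀ z, IsSturmLiouvilleSol q z (u z) (u' z) a b
  left_eq : ∀ z, u z a = c₀
  deriv_left_eq : ∀ z, u' z a = c₁

namespace IsSturmLiouvilleFamily

variable {a b x : ℝ} {q : ℝ → ℝ} {z w : ℂ}

section ComplexData

variable {c₀ c₁ d₀ d₁ : ℂ} {u u' v v' : ℂ → ℝ → ℂ} {p p' r r' : ℝ → ℂ}

theorem wronskian_left (hu : IsSturmLiouvilleFamily q c₀ c₁ u u' a b) (w : ℂ) :
    wronskian (u w) (u' w) p p' a = c₀ * p' a - c₁ * p a := by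
  rw [wronskian, hu.left_eq, hu.deriv_left_eq]

theorem isFundamentalSystem (hu : IsSturmLiouvilleFamily q c₀ c₁ u u' a b)
    (hv : IsSturmLiouvilleFamily q d₀ d₁ v v' a b) (hW : c₀ * d₁ - c₁ * d₀ ≠ 0) (z : ℂ) :
    IsFundamentalSystem q z (u z) (u' z) (v z) (v' z) a b where
  left := hu.isSol z
  right := hv.isSol z
  wronskian_ne_zero := by rwa [hu.wronskian_left, hv.left_eq, hv.deriv_left_eq]

-- Variation of constants: `u w - u z` solves the equation at `z` with source `(z - w) u w`.
theorem wronskian_mul_sub (hu : IsSturmLiouvilleFamily q c₀ c₁ u u' a b)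
    (h : IsFundamentalSystem q z p p' r r' a b) (w : ℂ) (hx : x ∈ uIcc a b) :
    wronskian p p' r r' a * (u w x - u z x) =
      (w - z) * (p x * (∫ t in a..x, u w t * r t) - r x * ∫ t in a..x, u w t * p t) := by
  rw [mul_sub, h.wronskian_mul _ (u' w) hx, h.wronskian_mul _ (u' z) hx,
    (hu.isSol w).wronskian_eq_add_integral h.left hx,
    (hu.isSol w).wronskian_eq_add_integral h.right hx, (hu.isSol z).wronskian_eq_left h.left hx,
    (hu.isSol z).wronskian_eq_left h.right hx]
  simp only [hu.wronskian_left]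
  ring

theorem exists_norm_sub_le (hu : IsSturmLiouvilleFamily q c₀ c₁ u u' a b)
    (h : IsFundamentalSystem q z p p' r r' a b) :
    ∃ C, 0 ≤ C ∧ ∀ w N, (∀ t ∈ uIcc a b, ‖u w t‖ ≤ N) →
      ∀ x ∈ uIcc a b, ‖u w x - u z x‖ ≤ C * ‖w - z‖ * N := by
  obtain ⟨P, hP⟩ := isCompact_uIcc.exists_bound_of_continuousOn h.left.continuousOn
  obtain ⟨R, hR⟩ := isCompact_uIcc.exists_bound_of_continuousOn h.right.continuousOn
  have hP₀ : 0 ≤ P := (norm_nonneg _).trans (hP a left_mem_uIcc)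
  have hR₀ : 0 ≤ R := (norm_nonneg _).trans (hR a left_mem_uIcc)
  have hD : 0 < ‖wronskian p p' r r' a‖ := norm_pos_iff.2 h.wronskian_ne_zero
  refine ⟨2 * P * R * |b - a| / ‖wronskian p p' r r' a‖, by positivity, fun w N hN x hx => ?_⟩
  rw [div_mul_eq_mul_div, div_mul_eq_mul_div, le_div_iff₀' hD, ← norm_mul,
    hu.wronskian_mul_sub h w hx, norm_mul]
  calc ‖w - z‖ * ‖p x * (∫ t in a..x, u w t * r t) - r x * ∫ t in a..x, u w t * p t‖
      ≤ ‖w - z‖ * (P * (N * R * |b - a|) + R * (N * P * |b - a|)) := by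
        gcongr
        refine (norm_sub_le _ _).trans (add_le_add ?_ ?_) <;> refine (norm_mul_le _ _).trans ?_
        · exact mul_le_mul (hP x hx) (norm_integral_mul_le hN hR hx) (norm_nonneg _) hP₀
        · exact mul_le_mul (hR x hx) (norm_integral_mul_le hN hP hx) (norm_nonneg _) hR₀
    _ = 2 * P * R * |b - a| * ‖w - z‖ * N := by ring

theorem tendstoUniformlyOn_mul (hu : IsSturmLiouvilleFamily q c₀ c₁ u u' a b)
    (h : IsFundamentalSystem q z p p' r r' a b) {g : ℝ → ℂ} (hg : ContinuousOn g (uIcc a b)) :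
    TendstoUniformlyOn (fun w t => u w t * g t) (fun t => u z t * g t) (𝓝 z) (uIcc a b) := by
  have : CompactSpace (uIcc a b) := isCompact_iff_compactSpace.1 isCompact_uIcc
  obtain ⟨C, hC, hle⟩ := hu.exists_norm_sub_le h
  let U (w : ℂ) : C(uIcc a b, ℂ) := ⟨_, (hu.isSol w).continuousOn.domRestrict⟩
  let G : C(uIcc a b, ℂ) := ⟨_, hg.domRestrict⟩
  have hU : ContinuousAt U z := continuousAt_of_norm_sub_le hC fun w =>
    (ContinuousMap.norm_le _ (by positivity)).2 fun x => by
      simpa only [dist_eq_norm] using!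
        hle w ‖U w‖ (fun t ht => (U w).norm_coe_le_norm ⟨t, ht⟩) x x.2
  have hUG : Tendsto (fun w => U w * G) (𝓝 z) (𝓝 (U z * G)) := hU.mul continuousAt_const
  rw [tendstoUniformlyOn_iff_tendstoUniformly_comp_coe]
  exact ContinuousMap.tendsto_iff_tendstoUniformly.1 hUG

theorem hasDerivAt_wronskian (hu : IsSturmLiouvilleFamily q c₀ c₁ u u' a b)
    (h : IsFundamentalSystem q z p p' r r' a b) {s s' : ℝ → ℂ}
    (hs : IsSturmLiouvilleSol q z s s' a b) :
    HasDerivAt (fun w => wronskian (u w) (u' w) s s' b) (∫ t in a..b, u z t * s t) z :=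
  hasDerivAt_of_eq_add_sub_mul (g := fun w => ∫ t in a..b, u w t * s t)
    (fun w => by
      rw [(hu.isSol w).wronskian_eq_add_integral hs right_mem_uIcc, hu.wronskian_left])
    ((hu.tendstoUniformlyOn_mul h hs.continuousOn).tendsto_intervalIntegral_of_continuousOn
      (.of_forall fun w => (hu.isSol w).continuousOn.mul hs.continuousOn))

theorem differentiableAt (hu : IsSturmLiouvilleFamily q c₀ c₁ u u' a b)
    (h : IsFundamentalSystem q z p p' r r' a b) :
    DifferentiableAt ℂ (fun w => u w b) z ∧ DifferentiableAt ℂ (fun w => u' w b) z := by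
  have hp := (hu.hasDerivAt_wronskian h h.left).differentiableAt
  have hr := (hu.hasDerivAt_wronskian h h.right).differentiableAt
  have hcancel := inv_mul_cancel_left₀ h.wronskian_ne_zero
  constructor
  · simpa only [← h.wronskian_mul _ _ right_mem_uIcc, hcancel] using
      ((hr.const_mul (p b)).fun_sub (hp.const_mul (r b))).const_mul (wronskian p p' r r' a)⁻¹
  · simpa only [← h.wronskian_mul_deriv _ _ right_mem_uIcc, hcancel] using
      ((hr.const_mul (p' b)).fun_sub (hp.const_mul (r' b))).const_mul (wronskian p p' r r' a)⁻¹

end ComplexData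

theorem conj_eq {c₀ c₁ : ℝ} {u u' : ℂ → ℝ → ℂ} {p p' r r' : ℝ → ℂ}
    (hu : IsSturmLiouvilleFamily q c₀ c₁ u u' a b)
    (h : IsFundamentalSystem q (conj z) p p' r r' a b) (hx : x ∈ uIcc a b) :
    u (conj z) x = conj (u z x) ∧ u' (conj z) x = conj (u' z x) :=
  h.eq_of_eq_left (hu.isSol _) (hu.isSol z).map_conj
    (by simp only [hu.left_eq, Complex.conj_ofReal])
    (by simp only [hu.deriv_left_eq, Complex.conj_ofReal]) hx

end IsSturmLiouvilleFamily

/-- Boundary data for the condition `A z * u'(b) = B z * u(b)` depending on the spectral parameter: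
a Nevanlinna function `B / A`, possibly `∞`, in homogeneous coordinates. -/
structure IsNevanlinnaPair (A B : ℂ → ℂ) : Prop where
  differentiableOn_left : DifferentiableOn ℂ A {z | z.im ≠ 0}
  differentiableOn_right : DifferentiableOn ℂ B {z | z.im ≠ 0}
  left_conj : ∀ z, z.im ≠ 0 → A (conj z) = conj (A z)
  right_conj : ∀ z, z.im ≠ 0 → B (conj z) = conj (B z)
  ne_zero : ∀ z, 0 < z.im → A z ≠ 0 ∨ B z ≠ 0
  im_nonneg : ∀ z, 0 < z.im → 0 ≤ (B z * conj (A z)).im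

theorem IsNevanlinna.isNevanlinnaPair {γ : ℂ → ℂ} (hγ : IsNevanlinna γ) :
    IsNevanlinnaPair (fun _ => 1) γ where
  differentiableOn_left := differentiableOn_const 1
  differentiableOn_right := hγ.1
  left_conj _ _ := (map_one _).symm
  right_conj := hγ.2.1
  ne_zero _ _ := .inl one_ne_zero
  im_nonneg z hz := by simpa only [map_one, mul_one] using hγ.2.2 z hz

theorem isNevanlinnaPair_zero_one : IsNevanlinnaPair (fun _ => 0) (fun _ => 1) where
  differentiableOn_left := differentiableOn_const 0
  differentiableOn_right := differentiableOn_const 1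
  left_conj _ _ := (map_zero _).symm
  right_conj _ _ := (map_one _).symm
  ne_zero _ _ := .inr one_ne_zero
  im_nonneg _ _ := by simp only [map_zero, mul_zero, Complex.zero_im, le_refl]

theorem im_mul_conj_nonneg_of_mul_eq_mul {A B y y' : ℂ} (hne : A ≠ 0 ∨ B ≠ 0)
    (him : 0 ≤ (B * conj A).im) (h : y' * A = y * B) : 0 ≤ (y' * conj y).im := by
  rcases eq_or_ne A 0 with rfl | hA
  · have hy : y = 0 := by simpa [hne.resolve_left (not_not.2 rfl)] using h.symm
    simp [hy]
  · have hscale : Complex.normSq A * (y' * conj y) = Complex.normSq y * (B * conj A) := by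
      rw [← Complex.mul_conj, ← Complex.mul_conj]
      linear_combination conj y * conj A * h
    have hscale_im := congrArg Complex.im hscale
    rw [Complex.im_ofReal_mul, Complex.im_ofReal_mul] at hscale_im
    exact nonneg_of_mul_nonneg_right
      (hscale_im.symm ▸ mul_nonneg (Complex.normSq_nonneg y) him) (Complex.normSq_pos.2 hA)

/-- The defect `u'(b; z) A(z) - u(b; z) B(z)` of `u` in the boundary condition given by the pair
`(A, B)` at the endpoint `b`. The Weyl–Titchmarsh function is the quotient of two of these. -/
def boundaryForm (A B : ℂ → ℂ) (u u' : ℂ → ℝ → ℂ) (b : ℝ) (z : ℂ) : ℂ :=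
  u' z b * A z - u z b * B z

section Weyl

variable {a b c₀ c₁ d₀ d₁ : ℝ} {q : ℝ → ℝ} {z : ℂ} {A B : ℂ → ℂ} {u u' φ φ' ψ ψ' : ℂ → ℝ → ℂ}
  {p p' r r' : ℝ → ℂ}

theorem boundaryForm_conj (hu : IsSturmLiouvilleFamily q c₀ c₁ u u' a b)
    (h : IsFundamentalSystem q (conj z) p p' r r' a b) (hAB : IsNevanlinnaPair A B)
    (hz : z.im ≠ 0) : boundaryForm A B u u' b (conj z) = conj (boundaryForm A B u u' b z) := by
  obtain ⟨hub, hub'⟩ := hu.conj_eq h right_mem_uIcc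
  simp only [boundaryForm, hub, hub', hAB.left_conj z hz, hAB.right_conj z hz, map_sub, map_mul]

theorem differentiableOn_boundaryForm {c₀ c₁ : ℂ}
    (hu : IsSturmLiouvilleFamily q c₀ c₁ u u' a b)
    (h : ∀ z, ∃ p p' r r', IsFundamentalSystem q z p p' r r' a b) (hAB : IsNevanlinnaPair A B) :
    DifferentiableOn ℂ (boundaryForm A B u u' b) {z | z.im ≠ 0} := by
  intro z hz
  obtain ⟨p, p', r, r', hz'⟩ := h z
  obtain ⟨hub, hub'⟩ := hu.differentiableAt hz'
  exact (hub'.differentiableWithinAt.mul (hAB.differentiableOn_left z hz)).sub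
    (hub.differentiableWithinAt.mul (hAB.differentiableOn_right z hz))

theorem boundaryForm_ne_zero_of_im_pos (hab : a < b)
    (hφ : IsSturmLiouvilleFamily q c₀ c₁ φ φ' a b) (hc : c₀ ≠ 0 ∨ c₁ ≠ 0)
    (hAB : IsNevanlinnaPair A B) (hz : 0 < z.im) : boundaryForm A B φ φ' b z ≠ 0 := by
  intro hzero
  have hleft : (φ' z a * conj (φ z a)).im = 0 := by
    rw [hφ.left_eq, hφ.deriv_left_eq, Complex.conj_ofReal, ← Complex.ofReal_mul,
      Complex.ofReal_im]
  have hright : 0 ≤ (φ' z b * conj (φ z b)).im :=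
    im_mul_conj_nonneg_of_mul_eq_mul (hAB.ne_zero z hz) (hAB.im_nonneg z hz) (sub_eq_zero.1 hzero)
  have hpos : 0 < ∫ t in a..b, ‖φ z t‖ ^ 2 := (hφ.isSol z).integral_norm_sq_pos hab (by
    simpa only [hφ.left_eq, hφ.deriv_left_eq, ne_eq, Complex.ofReal_eq_zero] using hc)
  have hgreen := (hφ.isSol z).im_deriv_mul_conj
  linarith [mul_pos hz hpos]

theorem im_boundaryForm_div_nonneg (hab : a ≤ b) (hφ : IsSturmLiouvilleFamily q c₀ c₁ φ φ' a b)
    (hψ : IsSturmLiouvilleFamily q d₀ d₁ ψ ψ' a b) (hW : 0 < c₀ * d₁ - c₁ * d₀)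
    (hAB : IsNevanlinnaPair A B) (hz : 0 < z.im) (hne : boundaryForm A B φ φ' b z ≠ 0) :
    0 ≤ (boundaryForm A B ψ ψ' b z / boundaryForm A B φ φ' b z).im := by
  set m := boundaryForm A B ψ ψ' b z / boundaryForm A B φ φ' b z
  have hm : m * boundaryForm A B φ φ' b z = boundaryForm A B ψ ψ' b z := div_mul_cancel₀ _ hne
  have hχ := (hψ.isSol z).sub ((hφ.isSol z).const_mul m)
  have hleft : ((ψ' z a - m * φ' z a) * conj (ψ z a - m * φ z a)).im =
      (c₀ * d₁ - c₁ * d₀) * m.im := by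
    simp only [hφ.left_eq, hφ.deriv_left_eq, hψ.left_eq, hψ.deriv_left_eq, map_sub, map_mul,
      Complex.conj_ofReal, Complex.mul_im, Complex.mul_re, Complex.sub_im, Complex.sub_re,
      Complex.conj_im, Complex.conj_re, Complex.ofReal_im, Complex.ofReal_re]
    ring
  have hright : 0 ≤ ((ψ' z b - m * φ' z b) * conj (ψ z b - m * φ z b)).im := by
    refine im_mul_conj_nonneg_of_mul_eq_mul (hAB.ne_zero z hz) (hAB.im_nonneg z hz) ?_
    simp only [boundaryForm] at hm
    linear_combination -hm
  have hgreen := hχ.im_deriv_mul_conj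
  have hnorm : 0 ≤ ∫ t in a..b, ‖ψ z t - m * φ z t‖ ^ 2 :=
    intervalIntegral.integral_nonneg hab fun _ _ => by positivity
  refine nonneg_of_mul_nonneg_right ?_ hW
  linarith [mul_nonneg hz.le hnorm]

theorem weylFn_isNevanlinna_general (hab : a < b) (hφ : IsSturmLiouvilleFamily q c₀ c₁ φ φ' a b)
    (hψ : IsSturmLiouvilleFamily q d₀ d₁ ψ ψ' a b) (hW : 0 < c₀ * d₁ - c₁ * d₀)
    (hAB : IsNevanlinnaPair A B) :
    (∀ z, z.im ≠ 0 → boundaryForm A B φ φ' b z ≠ 0) ∧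
      IsNevanlinna (fun z => boundaryForm A B ψ ψ' b z / boundaryForm A B φ φ' b z) := by
  have hsys := hφ.isFundamentalSystem hψ (by exact_mod_cast hW.ne')
  have hc : c₀ ≠ 0 ∨ c₁ ≠ 0 := by
    by_contra! hzero
    simp [hzero] at hW
  have hne : ∀ z : ℂ, z.im ≠ 0 → boundaryForm A B φ φ' b z ≠ 0 := fun z hz => by
    rcases hz.lt_or_gt with hneg | hpos
    · have hconj : 0 < (conj z).im := by simpa using hneg
      rw [← map_ne_zero conj, ← boundaryForm_conj hφ (hsys _) hAB hz]
      exact boundaryForm_ne_zero_of_im_pos hab hφ hc hAB hconj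
    · exact boundaryForm_ne_zero_of_im_pos hab hφ hc hAB hpos
  have hsys' : ∀ z, ∃ p p' r r', IsFundamentalSystem q z p p' r r' a b :=
    fun z => ⟨_, _, _, _, hsys z⟩
  refine ⟨hne, (differentiableOn_boundaryForm hψ hsys' hAB).div
    (differentiableOn_boundaryForm hφ hsys' hAB) hne, fun z hz => ?_, fun z hz =>
    im_boundaryForm_div_nonneg hab.le hφ hψ hW hAB hz (hne z hz.ne')⟩
  simp only [boundaryForm_conj hφ (hsys _) hAB hz, boundaryForm_conj hψ (hsys _) hAB hz, map_div₀]

end Weyl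

/-- The derivative of a solution of the Volterra equation, obtained by differentiating the equation
under the integral sign. -/
noncomputable def volterraDeriv (q : ℝ → ℝ) (c₁ : ℝ) (u : ℂ → ℝ → ℂ) (z : ℂ) (x : ℝ) : ℂ :=
  c₁ + ∫ s in 0..x, ((q s : ℂ) - z) * u z s

theorem IsRegSolution.isSturmLiouvilleFamily {a c₀ c₁ : ℝ} {q : ℝ → ℝ} {u : ℂ → ℝ → ℂ}
    (ha : 0 ≤ a) (hq : IntegrableOn q (Icc 0 a)) (hu : IsRegSolution a q c₀ c₁ u) :
    IsSturmLiouvilleFamily q c₀ c₁ u (volterraDeriv q c₁ u) 0 a := by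
  have hint : ∀ z, IntervalIntegrable (fun s => ((q s : ℂ) - z) * u z s) volume 0 a := fun z => by
    rw [← uIcc_of_le ha] at hq
    have hqz : IntervalIntegrable (fun s => (q s : ℂ) - z) volume 0 a :=
      .sub ⟨hq.intervalIntegrable.1.ofReal, hq.intervalIntegrable.2.ofReal⟩
        intervalIntegrable_const
    exact hqz.mul_continuousOn (by simpa only [uIcc_of_le ha] using hu.1 z)
  have hleft : ∀ z, u z 0 = c₀ := fun z => by simpa using hu.2 z 0 (left_mem_Icc.2 ha)
  exact ⟨fun z => ⟨isPrimitiveOn_of_eq_add_integral_sub_mul (hint z) fun x hx => by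
      rw [hu.2 z x (by rwa [uIcc_of_le ha] at hx), hleft, Complex.ofReal_zero, sub_zero]
      simp only [mul_assoc], .of_intervalIntegrable (hint z) c₁⟩,
    hleft, fun z => by
      rw [volterraDeriv, intervalIntegral.integral_same, add_zero]⟩

/-- **The Weyl–Titchmarsh function of a regular Sturm–Liouville problem is a Nevanlinna
function** (part of Statement 2.1°). For every Nevanlinna boundary parameter `γ` (and also
for `γ ≡ ∞`, giving `m_∞(z) = ψ(a;z)/φ(a;z)`) the denominator does not vanish on `ℂ∖ℝ`
and `m_γ` is a Nevanlinna function. -/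
theorem weylFn_isNevanlinna
    (a : ℝ) (ha : 0 < a)
    (q : ℝ → ℝ) (hq : IntegrableOn q (Icc 0 a))
    (α : ℝ) (hα : α ∈ Ioo 0 Real.pi)
    (φ ψ : ℂ → ℝ → ℂ)
    (hφ : IsRegSolution a q (Real.sin α) (Real.cos α) φ)
    (hψ : IsRegSolution a q (-Real.cos α) (Real.sin α) ψ)
    (φ' : ℂ → ℂ) (hφ' : ∀ z : ℂ,
      φ' z = (Real.cos α : ℂ) + ∫ s in (0:ℝ)..a, ((q s : ℂ) - z) * φ z s)
    (ψ' : ℂ → ℂ) (hψ' : ∀ z : ℂ,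
      ψ' z = (Real.sin α : ℂ) + ∫ s in (0:ℝ)..a, ((q s : ℂ) - z) * ψ z s)
    (γ : ℂ → ℂ) (hγ : IsNevanlinna γ) :
    ((∀ z : ℂ, z.im ≠ 0 → φ' z - φ z a * γ z ≠ 0) ∧
      IsNevanlinna (fun z => (ψ' z - ψ z a * γ z) / (φ' z - φ z a * γ z))) ∧
    ((∀ z : ℂ, z.im ≠ 0 → φ z a ≠ 0) ∧
      IsNevanlinna (fun z => ψ z a / φ z a)) := by
  obtain rfl : φ' = (volterraDeriv q (Real.cos α) φ · a) := funext hφ'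
  obtain rfl : ψ' = (volterraDeriv q (Real.sin α) ψ · a) := funext hψ'
  have hW : 0 < Real.sin α * Real.sin α - Real.cos α * -Real.cos α := by
    linarith [Real.sin_sq_add_cos_sq α, sq (Real.sin α), sq (Real.cos α)]
  have hweyl {A B : ℂ → ℂ} (hAB : IsNevanlinnaPair A B) :=
    weylFn_isNevanlinna_general ha (hφ.isSturmLiouvilleFamily ha.le hq)
      (hψ.isSturmLiouvilleFamily ha.le hq) hW hAB
  exact ⟨by simpa [boundaryForm] using hweyl hγ.isNevanlinnaPair,
    by simpa [boundaryForm] using hweyl isNevanlinnaPair_zero_one⟩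
end

section
/- Partial-fraction type identity in Example 3: For every λ₀ ∈ (−π/2, π/2] with λ₀ ≠ 0: ∑_{k∈ℤ} 1/((1+(λ₀+kπ)²)·(λ₀+kπ)) = cot λ₀ − sin(2λ₀)/(cosh 2 − cos(2λ₀)), the series converging absolutely. -/
/-!
Partial fractions split `1 / ((a² + w²) w)` into differences `1 / w - 1 / (w ± a i)`. Summed over
`w ∈ z + πℤ`, such a difference converges absolutely, and its sum can be taken along the symmetric
intervals `[-N, N]`, where each half is Euler's expansion of the cotangent. So the series equals
`(2a²)⁻¹ ((cot z - cot (z + a i)) + (cot z - cot (z - a i)))`.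
-/

lemma sum_Icc_neg_eq_add_sum_range {M : Type*} [AddCommMonoid M] (f : ℤ → M) (N : ℕ) :
    ∑ k ∈ Finset.Icc (-N : ℤ) N, f k =
      f 0 + ∑ n ∈ Finset.range N, (f (n + 1) + f (-(n + 1))) := by
  induction N with
  | zero => simp
  | succ N ih =>
    rw [Nat.cast_succ, Finset.Icc_succ_succ, Finset.sum_union (by simp),
      Finset.sum_pair (by lia), ih, Finset.sum_range_succ]
    abel

section Cotangent

open Complex SummationFilter
open scoped Real

lemma hasSum_symmetricIcc_one_div_add_intCast {x : ℂ} (hx : x ∈ integerComplement) :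
    HasSum (fun k : ℤ => 1 / (x + k)) (π * cot (π * x)) (symmetricIcc ℤ) := by
  rw [hasSum_symmetricIcc_iff]
  convert (tendsto_logDeriv_euler_cot_sub hx).const_add (1 / x) using 2 with N
  · rw [sum_Icc_neg_eq_add_sum_range]
    simp [cotTerm, sub_eq_add_neg, add_comm]
  · ring

lemma summable_inv_add_intCast_mul_inv_add_intCast (x y : ℂ) :
    Summable fun k : ℤ => (x + k)⁻¹ * (y + k)⁻¹ := by
  simp_rw [← mul_inv]
  apply EisensteinSeries.summable_inv_of_isBigO_rpow_inv one_lt_two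
  simpa [pow_two] using (EisensteinSeries.linear_inv_isBigO_right 1 y).mul
    (EisensteinSeries.linear_inv_isBigO_right 1 x)

lemma hasSum_one_div_add_intCast_sub_one_div_add_intCast {x y : ℂ}
    (hx : x ∈ integerComplement) (hy : y ∈ integerComplement) :
    HasSum (fun k : ℤ => 1 / (x + k) - 1 / (y + k)) (π * cot (π * x) - π * cot (π * y)) := by
  have hsummable : Summable fun k : ℤ => 1 / (x + k) - 1 / (y + k) :=
    ((summable_inv_add_intCast_mul_inv_add_intCast x y).mul_left (y - x)).congr fun k => by
      have hxk := integerComplement_add_ne_zero hx k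
      have hyk := integerComplement_add_ne_zero hy k
      field_simp
      ring
  have hsymmetric := (hasSum_symmetricIcc_one_div_add_intCast hx).sub
    (hasSum_symmetricIcc_one_div_add_intCast hy)
  rw [← hsymmetric.tsum_eq, tsum_eq_of_summable_unconditional hsummable]
  exact hsummable.hasSum

lemma div_pi_mem_integerComplement {z : ℂ} (hz : sin z ≠ 0) : z / π ∈ integerComplement := by
  rintro ⟨k, hk⟩
  exact sin_ne_zero_iff.1 hz k (by rw [hk, div_mul_cancel₀ _ (ofReal_ne_zero.2 Real.pi_ne_zero)])

lemma add_int_mul_pi_ne_zero {z : ℂ} (hz : sin z ≠ 0) (k : ℤ) : z + k * π ≠ 0 := fun h =>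
  sin_ne_zero_iff.1 hz (-k) (by push_cast; linear_combination h)

lemma hasSum_one_div_add_int_mul_pi_sub_one_div_add_int_mul_pi {z w : ℂ}
    (hz : sin z ≠ 0) (hw : sin w ≠ 0) :
    HasSum (fun k : ℤ => 1 / (z + k * π) - 1 / (w + k * π)) (cot z - cot w) := by
  have hpi : (π : ℂ) ≠ 0 := ofReal_ne_zero.2 Real.pi_ne_zero
  have hscale (u : ℂ) (k : ℤ) : 1 / (u + k * π) = (π : ℂ)⁻¹ * (1 / (u / π + k)) := by
    field_simp
  have hsum := (hasSum_one_div_add_intCast_sub_one_div_add_intCast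
    (div_pi_mem_integerComplement hz) (div_pi_mem_integerComplement hw)).mul_left (π : ℂ)⁻¹
  rw [mul_div_cancel₀ z hpi, mul_div_cancel₀ w hpi, ← mul_sub, inv_mul_cancel_left₀ hpi] at hsum
  simpa only [hscale, mul_sub] using hsum

lemma cot_add_cot {z w : ℂ} (hz : sin z ≠ 0) (hw : sin w ≠ 0) :
    cot z + cot w = sin (z + w) / (sin z * sin w) := by
  rw [cot, cot, sin_add]
  field_simp
  ring

lemma cosh_two_mul_sub_cos_two_mul (a z : ℂ) :
    cosh (2 * a) - cos (2 * z) = 2 * (sin (z + a * I) * sin (z - a * I)) := by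
  have hcos : cos (2 * z) = cos ((z + a * I) + (z - a * I)) := by ring_nf
  have hcosh : cosh (2 * a) = cos ((z + a * I) - (z - a * I)) := by
    rw [← cos_mul_I]
    ring_nf
  rw [hcos, hcosh, cos_add, cos_sub]
  ring

lemma cot_add_mul_I_add_cot_sub_mul_I {a z : ℂ}
    (hadd : sin (z + a * I) ≠ 0) (hsub : sin (z - a * I) ≠ 0) :
    cot (z + a * I) + cot (z - a * I) = 2 * (sin (2 * z) / (cosh (2 * a) - cos (2 * z))) := by
  rw [cot_add_cot hadd hsub, cosh_two_mul_sub_cos_two_mul, add_add_sub_cancel, ← two_mul]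
  field_simp

lemma one_div_sq_add_sq_mul_self {a w : ℂ} (ha : a ≠ 0) (hw : w ≠ 0)
    (hadd : w + a * I ≠ 0) (hsub : w - a * I ≠ 0) :
    1 / ((a ^ 2 + w ^ 2) * w) =
      1 / (2 * a ^ 2) * ((1 / w - 1 / (w + a * I)) + (1 / w - 1 / (w - a * I))) := by
  have hfactor : a ^ 2 + w ^ 2 = (w + a * I) * (w - a * I) := by
    linear_combination a ^ 2 * I_sq
  rw [hfactor]
  field_simp
  linear_combination 2 * a ^ 2 * I_sq

theorem example3_partial_fraction_identity_general {a z : ℂ} (ha : a ≠ 0) (hz : sin z ≠ 0)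
    (haz : cosh (2 * a) ≠ cos (2 * z)) :
    HasSum (fun k : ℤ => 1 / ((a ^ 2 + (z + k * π) ^ 2) * (z + k * π)))
      (1 / a ^ 2 * (cot z - sin (2 * z) / (cosh (2 * a) - cos (2 * z)))) := by
  obtain ⟨hadd, hsub⟩ : sin (z + a * I) ≠ 0 ∧ sin (z - a * I) ≠ 0 := by
    simpa [cosh_two_mul_sub_cos_two_mul] using sub_ne_zero.2 haz
  have hvalue : 1 / a ^ 2 * (cot z - sin (2 * z) / (cosh (2 * a) - cos (2 * z))) =
      1 / (2 * a ^ 2) * ((cot z - cot (z + a * I)) + (cot z - cot (z - a * I))) := by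
    rw [sub_add_sub_comm, cot_add_mul_I_add_cot_sub_mul_I hadd hsub]
    ring
  have hdifferences := (hasSum_one_div_add_int_mul_pi_sub_one_div_add_int_mul_pi hz hadd).add
    (hasSum_one_div_add_int_mul_pi_sub_one_div_add_int_mul_pi hz hsub)
  rw [hvalue]
  refine (hdifferences.mul_left (1 / (2 * a ^ 2))).congr_fun fun k => ?_
  have haddk := add_int_mul_pi_ne_zero hadd k
  have hsubk := add_int_mul_pi_ne_zero hsub k
  rw [add_right_comm z] at haddk ⊢
  rw [← add_sub_right_comm z] at hsubk ⊢
  exact one_div_sq_add_sq_mul_self ha (add_int_mul_pi_ne_zero hz k) haddk hsubk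

lemma hasSum_one_div_sq_add_sq_mul_self_real {a x : ℝ} (ha : a ≠ 0) (hx : Real.sin x ≠ 0) :
    HasSum (fun k : ℤ => 1 / ((a ^ 2 + (x + k * π) ^ 2) * (x + k * π)))
      (1 / a ^ 2 * (Real.cot x - Real.sin (2 * x) / (Real.cosh (2 * a) - Real.cos (2 * x)))) := by
  have hax : Real.cosh (2 * a) ≠ Real.cos (2 * x) :=
    ((Real.cos_le_one _).trans_lt (Real.one_lt_cosh.2 (mul_ne_zero two_ne_zero ha))).ne'
  exact_mod_cast example3_partial_fraction_identity_general (a := a) (z := x)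
    (by exact_mod_cast ha) (by exact_mod_cast hx) (by exact_mod_cast hax)

end Cotangent

/-- **Partial-fraction type identity in Example 3.**
For `λ₀ ∈ (-π/2, π/2]`, `λ₀ ≠ 0`:
`∑_{k∈ℤ} 1/((1+(λ₀+kπ)²)(λ₀+kπ)) = cot λ₀ - sin(2λ₀)/(cosh 2 - cos(2λ₀))`,
the series converging absolutely. -/
theorem example3_partial_fraction_identity
    (lam₀ : ℝ) (hlam₀ : lam₀ ∈ Set.Ioc (-(Real.pi / 2)) (Real.pi / 2)) (hne : lam₀ ≠ 0) :
    Summable (fun k : ℤ =>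
      1 / ((1 + (lam₀ + k * Real.pi) ^ 2) * (lam₀ + k * Real.pi))) ∧
    ∑' k : ℤ, 1 / ((1 + (lam₀ + k * Real.pi) ^ 2) * (lam₀ + k * Real.pi)) =
      Real.cos lam₀ / Real.sin lam₀ -
        Real.sin (2 * lam₀) / (Real.cosh 2 - Real.cos (2 * lam₀)) := by
  have hsin : Real.sin lam₀ ≠ 0 := fun h => hne <|
    (Real.sin_eq_zero_iff_of_lt_of_lt (by linarith [hlam₀.1, Real.pi_pos])
      (by linarith [hlam₀.2, Real.pi_pos])).1 h
  have hsum := hasSum_one_div_sq_add_sq_mul_self_real one_ne_zero hsin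
  simp only [one_pow, div_one, one_mul, mul_one, Real.cot_eq_cos_div_sin] at hsum
  exact ⟨hsum.summable, hsum.tsum_eq⟩
end
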